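/- Let L be a non-degenerate real random variable with M_L(t) = E[e^{tL}] < ∞ for all t ≥ 0, and let ε ≥ 0 satisfy ε < ess sup L. Then there exists a unique t₀ > 0 solving the saddle-point equation K_L'(t₀) = ε + 1/t₀ + 1/(t₀+1); equivalently, t₀ is the unique minimizer over (0,∞) of the strictly convex function F_ε(t) = K_L(t) − tε − log t − log(1+t). -/

import Mathlib

open MeasureTheory Real

theorem aux_convex {Ω : Type*} [MeasurableSpace Ω] (μ : Measure Ω) [IsProbabilityMeasure μ]
    (L : Ω → ℝ) (hi : Set.Ioi 0 ⊆ interior (ProbabilityTheory.integrableExpSet L μ)) :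
    ConvexOn ℝ (Set.Ioi 0) (ProbabilityTheory.cgf L μ) := by
  have hA : ∀ t ∈ Set.Ioi (0:ℝ), AnalyticAt ℝ (ProbabilityTheory.cgf L μ) t := fun t ht =>
    ProbabilityTheory.analyticAt_cgf (hi ht)
  apply convexOn_of_deriv2_nonneg (convex_Ioi 0)
  · exact fun t ht => (hA t ht).continuousAt.continuousWithinAt
  · rw [interior_Ioi]
    exact fun t ht => (hA t ht).differentiableAt.differentiableWithinAt
  · rw [interior_Ioi]
    exact fun t ht => (hA t ht).deriv.differentiableAt.differentiableWithinAt
  · rw [interior_Ioi]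
    intro t ht
    rw [← iteratedDeriv_eq_iterate, ← ProbabilityTheory.variance_tilted_mul (hi ht)]
    exact ProbabilityTheory.variance_nonneg _ _

theorem aux_delta {Ω : Type*} [MeasurableSpace Ω] (μ : Measure Ω) [IsProbabilityMeasure μ]
    (L : Ω → ℝ) (ε : ℝ) (hεsup : 0 < μ {ω | ε < L ω}) :
    ∃ δ > 0, 0 < μ {ω | ε + δ ≤ L ω} := by
  by_contra! h
  have : μ (⋃ n : ℕ, {ω | ε + 1 / ((n:ℝ) + 1) ≤ L ω}) = 0 := by
    rw [measure_iUnion_null_iff]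
    intro n
    exact le_antisymm (h _ (by positivity)) (by simp)
  refine hεsup.ne' (measure_mono_null ?_ this)
  intro ω hω
  obtain ⟨n, hn⟩ := exists_nat_one_div_lt (sub_pos.2 (show ε < L ω from hω))
  refine Set.mem_iUnion.2 ⟨n, ?_⟩
  show ε + 1 / ((n:ℝ) + 1) ≤ L ω
  linarith

/-- Existence and uniqueness of the saddle point: for a non-degenerate `L` with
everywhere-finite MGF and `0 ≤ ε < ess sup L` (i.e. `μ(L > ε) > 0`), the function
`F_ε(t) = K_L(t) - tε - log t - log(1+t)` is strictly convex on `(0,∞)` and there is a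
unique `t₀ > 0` with `K_L'(t₀) = ε + 1/t₀ + 1/(t₀+1)`, which is the unique minimizer
of `F_ε` over `(0,∞)`. -/
theorem stmt11 {Ω : Type*} [MeasurableSpace Ω] (μ : Measure Ω) [IsProbabilityMeasure μ]
    (L : Ω → ℝ) (hL : Measurable L)
    (hnondeg : ¬ ∃ c : ℝ, ∀ᵐ ω ∂μ, L ω = c)
    (hMGF : ∀ t : ℝ, 0 ≤ t → Integrable (fun ω => Real.exp (t * L ω)) μ)
    (K : ℝ → ℝ) (hK : K = fun t => Real.log (∫ ω, Real.exp (t * L ω) ∂μ))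
    (ε : ℝ) (hε : 0 ≤ ε) (hεsup : 0 < μ {ω | ε < L ω})
    (F : ℝ → ℝ) (hF : F = fun t => K t - t * ε - Real.log t - Real.log (1 + t)) :
    StrictConvexOn ℝ (Set.Ioi 0) F ∧
    ∃! t₀ : ℝ, 0 < t₀ ∧ deriv K t₀ = ε + 1 / t₀ + 1 / (t₀ + 1) ∧
      ∀ t : ℝ, 0 < t → t ≠ t₀ → F t₀ < F t := by
  have hKc : K = ProbabilityTheory.cgf L μ := by rw [hK]; rfl
  have hi : Set.Ioi 0 ⊆ interior (ProbabilityTheory.integrableExpSet L μ) :=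
    interior_maximal (fun t ht => hMGF t (le_of_lt ht)) isOpen_Ioi
  have hKconv : ConvexOn ℝ (Set.Ioi 0) K := hKc ▸ aux_convex μ L hi
  have hKd : ∀ t, 0 < t → DifferentiableAt ℝ K t := fun t ht =>
    hKc ▸ (ProbabilityTheory.analyticAt_cgf (hi ht)).differentiableAt
  have hFd : ∀ t, 0 < t → HasDerivAt F (deriv K t - ε - 1 / t - 1 / (1 + t)) t := by
    intro t ht
    have h1 := (hKd t ht).hasDerivAt
    have h2 : HasDerivAt (fun t : ℝ => t * ε) ε t := by
      simpa using (hasDerivAt_id t).mul_const ε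
    have h3 : HasDerivAt Real.log (1 / t) t := by
      simpa using Real.hasDerivAt_log ht.ne'
    have h4 : HasDerivAt (fun t : ℝ => Real.log (1 + t)) (1 / (1 + t)) t :=
      ((hasDerivAt_id t).const_add 1).log (by simp only [id]; linarith)
    rw [hF]
    exact ((h1.sub h2).sub h3).sub h4
  have hconv : StrictConvexOn ℝ (Set.Ioi 0) F := by
    refine ⟨convex_Ioi 0, ?_⟩
    intro x hx y hy hxy a b ha hb hab
    have h1 := hKconv.2 hx hy ha.le hb.le hab
    have h2 := strictConcaveOn_log_Ioi.2 hx hy hxy ha hb hab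
    have h3 := strictConcaveOn_log_Ioi.concaveOn.2 (x := 1 + x) (y := 1 + y)
      (Set.mem_Ioi.2 (by have := Set.mem_Ioi.1 hx; linarith))
      (Set.mem_Ioi.2 (by have := Set.mem_Ioi.1 hy; linarith)) ha.le hb.le hab
    have e : a • (1 + x) + b • (1 + y) = 1 + (a • x + b • y) := by
      simp only [smul_eq_mul]; linear_combination hab
    rw [e] at h3
    simp only [hF, smul_eq_mul] at *
    linarith
  refine ⟨hconv, ?_⟩
  obtain ⟨δ, hδ, hp⟩ := aux_delta μ L ε hεsup
  set p := μ.real {ω | ε + δ ≤ L ω} with hpdef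
  have hp' : 0 < p := ENNReal.toReal_pos hp.ne' (measure_ne_top _ _)
  have hlow : ∀ t, 0 < t → Real.log p + t * (ε + δ) ≤ K t := by
    intro t ht
    have := ProbabilityTheory.measure_ge_le_exp_cgf (μ := μ) (X := L) (ε + δ) ht.le
      (hMGF t ht.le)
    have h2 := Real.log_le_log hp' this
    rw [Real.log_exp] at h2
    rw [hKc]
    linarith
  have hlog : ∀ x : ℝ, 0 < x → Real.log x ≤ δ / 4 * x - Real.log (δ / 4) - 1 := by
    intro x hx
    have := Real.log_le_sub_one_of_pos (show 0 < δ / 4 * x by positivity)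
    rw [Real.log_mul (by positivity) hx.ne'] at this
    linarith
  set C := Real.log p - δ / 4 + Real.log (δ / 4) + 1 with hC
  have hF1 : ∀ t, 0 < t → C - Real.log t ≤ F t := by
    intro t ht
    have h1 := hlow t ht
    have h2 := hlog (1 + t) (by linarith)
    have h3 : 0 < t * δ := by positivity
    simp only [hF]
    linarith
  have hF2 : ∀ t, 0 < t → C + Real.log (δ / 4) + 1 + δ / 2 * t ≤ F t := by
    intro t ht
    have h1 := hlow t ht
    have h2 := hlog (1 + t) (by linarith)
    have h3 := hlog t ht
    simp only [hF]
    linarith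
  set a := Real.exp (C - F 1) with ha
  set b := (F 1 - (C + Real.log (δ / 4) + 1)) / (δ / 2) with hb
  have hsub : ∀ t, 0 < t → F t ≤ F 1 → t ∈ Set.Icc a b := by
    intro t ht h
    constructor
    · rw [ha, ← Real.le_log_iff_exp_le ht]
      linarith [hF1 t ht]
    · rw [hb, le_div_iff₀ (by positivity)]
      linarith [hF2 t ht]
  have h1m := hsub 1 one_pos le_rfl
  have hapos : 0 < a := Real.exp_pos _
  obtain ⟨t₀, ht₀, hmin⟩ := isCompact_Icc.exists_isMinOn ⟨1, h1m⟩
    (fun t ht => (hFd t (hapos.trans_le ht.1)).continuousAt.continuousWithinAt :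
      ContinuousOn F (Set.Icc a b))
  have hpos : 0 < t₀ := hapos.trans_le ht₀.1
  have hmin' : IsMinOn F (Set.Ioi 0) t₀ := by
    intro t ht
    by_cases h : F t ≤ F 1
    · exact hmin (hsub t ht h)
    · exact (hmin h1m : F t₀ ≤ F 1).trans (not_le.1 h).le
  refine ⟨t₀, ⟨hpos, ?_, ?_⟩, ?_⟩
  · have := (hmin'.isLocalMin (Ioi_mem_nhds hpos)).hasDerivAt_eq_zero (hFd t₀ hpos)
    rw [add_comm t₀ 1]
    linarith
  · intro t ht hne
    refine lt_of_le_of_ne (hmin' ht) fun h => hne ?_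
    have hmt : IsMinOn F (Set.Ioi 0) t := by
      intro s hs
      have : F t₀ ≤ F s := hmin' hs
      exact h ▸ this
    exact hconv.eq_of_isMinOn hmt hmin' ht hpos
  · rintro t ⟨ht, -, h⟩
    by_contra hne
    exact absurd (h t₀ hpos (Ne.symm hne)) (not_lt.2 (hmin' ht))
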